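/- For density matrices ρ, σ on H_X ⊗ H_Y, the relative entropy is monotone under partial trace: S(ρ‖σ) ≥ S(ρ^X‖σ^X), where ρ^X = Tr_Y ρ and σ^X = Tr_Y σ. -/

import Mathlib

open scoped Kronecker ComplexOrder Classical

/-- A density matrix: positive semidefinite with unit trace. -/
def IsDensity {n : Type*} [Fintype n] [DecidableEq n] (ρ : Matrix n n ℂ) : Prop :=
  ρ.PosSemidef ∧ ρ.trace = 1

/-- Matrix logarithm of a Hermitian matrix via the spectral theorem
(with the convention `log 0 = 0` on the kernel; junk value `0` if not Hermitian). -/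
noncomputable def mlog {n : Type*} [Fintype n] [DecidableEq n]
    (M : Matrix n n ℂ) : Matrix n n ℂ :=
  if h : M.IsHermitian then
    (h.eigenvectorUnitary : Matrix n n ℂ) *
      Matrix.diagonal (fun i => (Real.log (h.eigenvalues i) : ℂ)) *
        star (h.eigenvectorUnitary : Matrix n n ℂ)
  else 0

/-- Quantum relative entropy `S(ρ‖σ) = Tr(ρ log ρ) - Tr(ρ log σ)`, with value `⊤`
when the support of `ρ` is not contained in the support of `σ`. -/
noncomputable def relEnt {n : Type*} [Fintype n] [DecidableEq n]
    (ρ σ : Matrix n n ℂ) : EReal :=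
  if ∀ v : n → ℂ, σ.mulVec v = 0 → ρ.mulVec v = 0 then
    ((((ρ * mlog ρ).trace - (ρ * mlog σ).trace).re : ℝ) : EReal)
  else ⊤

/-- Max-relative entropy `S_∞(ρ‖σ) = inf {k : ρ ≤ 2^k σ}` (as an extended real). -/
noncomputable def maxRelEnt {n : Type*} [Fintype n] [DecidableEq n]
    (ρ σ : Matrix n n ℂ) : EReal :=
  sInf {k : EReal | ∃ r : ℝ, k = (r : EReal) ∧
    ((((2 : ℝ) ^ r : ℝ) : ℂ) • σ - ρ).PosSemidef}

/-- Partial trace over the second tensor factor. -/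
noncomputable def ptraceB {A B : Type*} [Fintype A] [Fintype B]
    (M : Matrix (A × B) (A × B) ℂ) : Matrix A A ℂ :=
  Matrix.of fun a a' => ∑ b, M (a, b) (a', b)

namespace RelEntMonotone

open Matrix Filter Topology

section Spectral

variable {n : Type*} [Fintype n] [DecidableEq n]

/-- The functional whose supremum over `Z` is `⟨ρ, (L_σ + t R_ρ)⁻¹ ρ⟩`, with `L` and `R` the left
and right multiplication operators and `⟨·, ·⟩` the Hilbert-Schmidt inner product. -/
noncomputable def dualForm (ρ σ : Matrix n n ℂ) (t : ℝ) (Z : Matrix n n ℂ) : ℝ :=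
  2 * (Zᴴ * ρ).trace.re - (Zᴴ * σ * Z).trace.re - t * (Zᴴ * Z * ρ).trace.re

/-- The transition matrix from an eigenbasis of `ρ` to an eigenbasis of `σ`. -/
noncomputable def transition {ρ σ : Matrix n n ℂ} (hρ : ρ.IsHermitian) (hσ : σ.IsHermitian) :
    Matrix n n ℂ :=
  star (hσ.eigenvectorUnitary : Matrix n n ℂ) * (hρ.eigenvectorUnitary : Matrix n n ℂ)

/-- The value of `⟨ρ, (L_σ + t R_ρ)⁻¹ ρ⟩` in terms of eigenvalues. -/
noncomputable def resolventForm {ρ σ : Matrix n n ℂ} (hρ : ρ.IsHermitian) (hσ : σ.IsHermitian)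
    (t : ℝ) : ℝ :=
  ∑ j, ∑ i, Complex.normSq (transition hρ hσ j i) * hρ.eigenvalues i *
    (hρ.eigenvalues i / (hσ.eigenvalues j + t * hρ.eigenvalues i))

/-- The integral of `resolventForm` from `0` to `t`. -/
noncomputable def logForm {ρ σ : Matrix n n ℂ} (hρ : ρ.IsHermitian) (hσ : σ.IsHermitian)
    (t : ℝ) : ℝ :=
  ∑ j, ∑ i, Complex.normSq (transition hρ hσ j i) * hρ.eigenvalues i *
    (Real.log (hσ.eigenvalues j + t * hρ.eigenvalues i) - Real.log (hσ.eigenvalues j))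

lemma spectral_eq {M : Matrix n n ℂ} (h : M.IsHermitian) :
    M = (h.eigenvectorUnitary : Matrix n n ℂ) * diagonal (fun i => (h.eigenvalues i : ℂ)) *
      star (h.eigenvectorUnitary : Matrix n n ℂ) := by
  conv_lhs => rw [h.spectral_theorem]
  rfl

lemma star_mul_unitary (U : unitaryGroup n ℂ) : star (U : Matrix n n ℂ) * U = 1 :=
  Unitary.coe_star_mul_self U

lemma unitary_mul_star (U : unitaryGroup n ℂ) : (U : Matrix n n ℂ) * star (U : Matrix n n ℂ) = 1 :=
  Unitary.coe_mul_star_self U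

lemma trace_mul_diagonal_conj (U V : unitaryGroup n ℂ) (p q : n → ℝ) :
    (((U : Matrix n n ℂ) * diagonal (fun i => (p i : ℂ)) * star (U : Matrix n n ℂ)) *
      ((V : Matrix n n ℂ) * diagonal (fun i => (q i : ℂ)) * star (V : Matrix n n ℂ))).trace.re =
    ∑ j, ∑ i, Complex.normSq ((star (V : Matrix n n ℂ) * (U : Matrix n n ℂ)) j i) * p i * q j := by
  set W := star (V : Matrix n n ℂ) * (U : Matrix n n ℂ) with hW
  have hW' : star (U : Matrix n n ℂ) * V = star W := by simp [hW]
  have : (((U : Matrix n n ℂ) * diagonal (fun i => (p i : ℂ)) * star (U : Matrix n n ℂ)) *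
      ((V : Matrix n n ℂ) * diagonal (fun i => (q i : ℂ)) * star (V : Matrix n n ℂ))).trace =
      (W * diagonal (fun i => (p i : ℂ)) * star W * diagonal (fun i => (q i : ℂ))).trace := by
    rw [← hW', hW, trace_mul_comm]
    simp only [Matrix.mul_assoc]
    rw [trace_mul_comm]
    simp only [Matrix.mul_assoc]
    rw [trace_mul_comm]
    simp only [Matrix.mul_assoc]
  rw [this, trace, Complex.re_sum]
  refine Finset.sum_congr rfl fun j _ => ?_
  rw [diag_apply, mul_diagonal, mul_apply, Finset.sum_mul, Complex.re_sum]
  refine Finset.sum_congr rfl fun i _ => ?_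
  rw [mul_diagonal, star_apply]
  simp only [Complex.normSq_apply, Complex.mul_re, Complex.mul_im, Complex.ofReal_re,
    Complex.ofReal_im, Complex.star_def, Complex.conj_re, Complex.conj_im]
  ring

lemma sum_normSq_transition {ρ σ : Matrix n n ℂ} (hρ : ρ.IsHermitian) (hσ : σ.IsHermitian) (i : n) :
    ∑ j, Complex.normSq (transition hρ hσ j i) = 1 := by
  have h : star (transition hρ hσ) * transition hρ hσ = 1 := by
    simp only [transition, star_mul, star_star]
    rw [Matrix.mul_assoc, ← Matrix.mul_assoc _ (star _), unitary_mul_star, Matrix.one_mul,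
      star_mul_unitary]
  have h' := congrArg Complex.re (congrFun (congrFun h i) i)
  rw [mul_apply, Complex.re_sum] at h'
  simpa [star_apply, Complex.normSq_apply] using h'

lemma sum_normSq_transition_mul_eigenvalues {ρ σ : Matrix n n ℂ} (hρ : ρ.IsHermitian)
    (hσ : σ.IsHermitian) :
    ∑ j, ∑ i, Complex.normSq (transition hρ hσ j i) * hρ.eigenvalues i = ρ.trace.re := by
  rw [Finset.sum_comm, hρ.trace_eq_sum_eigenvalues, Complex.re_sum]
  refine Finset.sum_congr rfl fun i _ => ?_
  rw [← Finset.sum_mul, sum_normSq_transition]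
  simp

lemma trace_mul_mlog_sub {ρ σ : Matrix n n ℂ} (hρ : ρ.IsHermitian) (hσ : σ.IsHermitian) :
    ((ρ * mlog ρ).trace - (ρ * mlog σ).trace).re =
    ∑ j, ∑ i, Complex.normSq (transition hρ hσ j i) * hρ.eigenvalues i *
      (Real.log (hρ.eigenvalues i) - Real.log (hσ.eigenvalues j)) := by
  have hdiag : (ρ * mlog ρ).trace.re = ∑ i, hρ.eigenvalues i * Real.log (hρ.eigenvalues i) := by
    have h : ρ * mlog ρ = (hρ.eigenvectorUnitary : Matrix n n ℂ) *
        (diagonal (fun i => (hρ.eigenvalues i : ℂ)) *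
          diagonal (fun i => (Real.log (hρ.eigenvalues i) : ℂ))) *
        star (hρ.eigenvectorUnitary : Matrix n n ℂ) := by
      rw [mlog, dif_pos hρ]
      conv_lhs =>
        enter [1]
        rw [spectral_eq hρ]
      simp only [Matrix.mul_assoc]
      rw [← Matrix.mul_assoc (star _) (hρ.eigenvectorUnitary : Matrix n n ℂ), star_mul_unitary,
        Matrix.one_mul]
    rw [h, trace_mul_comm, ← Matrix.mul_assoc, star_mul_unitary, Matrix.one_mul,
      diagonal_mul_diagonal, trace_diagonal, Complex.re_sum]
    simp [← Complex.ofReal_mul]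
  have hcross : (ρ * mlog σ).trace.re = ∑ j, ∑ i, Complex.normSq (transition hρ hσ j i) *
      hρ.eigenvalues i * Real.log (hσ.eigenvalues j) := by
    rw [mlog, dif_pos hσ]
    conv_lhs => rw [spectral_eq hρ]
    exact trace_mul_diagonal_conj _ _ _ _
  rw [Complex.sub_re, hdiag, hcross]
  simp only [mul_sub, Finset.sum_sub_distrib]
  congr 1
  rw [Finset.sum_comm]
  refine Finset.sum_congr rfl fun i _ => ?_
  simp only [mul_assoc]
  rw [← Finset.sum_mul, sum_normSq_transition, one_mul]

/-- `dualForm` in eigenbases, with `Z` given by its matrix entries `z` between them. -/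
lemma dualForm_conj {ρ σ : Matrix n n ℂ} (hρ : ρ.IsHermitian) (hσ : σ.IsHermitian) (t : ℝ)
    (z : Matrix n n ℂ) :
    dualForm ρ σ t ((hσ.eigenvectorUnitary : Matrix n n ℂ) * z *
      star (hρ.eigenvectorUnitary : Matrix n n ℂ)) =
    ∑ j, ∑ i, (2 * hρ.eigenvalues i * (star (z j i) * transition hρ hσ j i).re -
      (hσ.eigenvalues j + t * hρ.eigenvalues i) * Complex.normSq (z j i)) := by
  obtain ⟨U, hU⟩ : ∃ U, U = hρ.eigenvectorUnitary := ⟨_, rfl⟩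
  obtain ⟨V, hV⟩ : ∃ V, V = hσ.eigenvectorUnitary := ⟨_, rfl⟩
  have hρU := spectral_eq hρ
  have hσV := spectral_eq hσ
  rw [← hU] at hρU
  rw [← hV] at hσV
  have hUc (A : Matrix n n ℂ) : star (U : Matrix n n ℂ) * (U * A) = A := by
    rw [← Matrix.mul_assoc, star_mul_unitary, Matrix.one_mul]
  have hVc (A : Matrix n n ℂ) : star (V : Matrix n n ℂ) * (V * A) = A := by
    rw [← Matrix.mul_assoc, star_mul_unitary, Matrix.one_mul]
  have hlin : (((V : Matrix n n ℂ) * z * star (U : Matrix n n ℂ))ᴴ * ρ).trace =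
      (zᴴ * (transition hρ hσ * diagonal (fun i => (hρ.eigenvalues i : ℂ)))).trace := by
    rw [transition, ← hU, ← hV]
    conv_lhs => rw [hρU]
    simp only [← star_eq_conjTranspose, star_mul, star_star, Matrix.mul_assoc]
    rw [trace_mul_comm]
    simp only [Matrix.mul_assoc, star_mul_unitary, Matrix.mul_one]
  have hleft : (((V : Matrix n n ℂ) * z * star (U : Matrix n n ℂ))ᴴ * σ *
      ((V : Matrix n n ℂ) * z * star (U : Matrix n n ℂ))).trace =
      (zᴴ * (diagonal (fun i => (hσ.eigenvalues i : ℂ)) * z)).trace := by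
    conv_lhs => rw [hσV]
    simp only [← star_eq_conjTranspose, star_mul, star_star, Matrix.mul_assoc, hVc]
    rw [trace_mul_comm]
    simp only [Matrix.mul_assoc, star_mul_unitary, Matrix.mul_one]
  have hright : (((V : Matrix n n ℂ) * z * star (U : Matrix n n ℂ))ᴴ *
      ((V : Matrix n n ℂ) * z * star (U : Matrix n n ℂ)) * ρ).trace =
      (zᴴ * (z * diagonal (fun i => (hρ.eigenvalues i : ℂ)))).trace := by
    conv_lhs => rw [hρU]
    simp only [← star_eq_conjTranspose, star_mul, star_star, Matrix.mul_assoc, hVc, hUc]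
    rw [trace_mul_comm]
    simp only [Matrix.mul_assoc, star_mul_unitary, Matrix.mul_one]
  have htr (A : Matrix n n ℂ) : (zᴴ * A).trace.re = ∑ j, ∑ i, (star (z j i) * A j i).re := by
    simp only [trace, diag_apply, mul_apply, conjTranspose_apply, Complex.re_sum]
    exact Finset.sum_comm
  rw [dualForm, ← hU, ← hV, hlin, hleft, hright, htr, htr, htr]
  simp only [Finset.mul_sum, ← Finset.sum_sub_distrib]
  refine Finset.sum_congr rfl fun j _ => Finset.sum_congr rfl fun i _ => ?_
  simp [mul_diagonal, diagonal_mul, Complex.normSq_apply]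
  ring

lemma dualForm_le_resolventForm {ρ σ : Matrix n n ℂ} (hρ : ρ.PosSemidef) (hσ : σ.PosSemidef)
    {t : ℝ} (ht : 0 < t) (Z : Matrix n n ℂ) :
    dualForm ρ σ t Z ≤ resolventForm hρ.1 hσ.1 t := by
  set z := star (hσ.1.eigenvectorUnitary : Matrix n n ℂ) * Z *
    (hρ.1.eigenvectorUnitary : Matrix n n ℂ) with hz
  have hZ : Z = (hσ.1.eigenvectorUnitary : Matrix n n ℂ) * z *
      star (hρ.1.eigenvectorUnitary : Matrix n n ℂ) := by
    rw [hz]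
    simp only [Matrix.mul_assoc, unitary_mul_star, Matrix.mul_one]
    rw [← Matrix.mul_assoc, unitary_mul_star, Matrix.one_mul]
  rw [hZ, dualForm_conj, resolventForm]
  refine Finset.sum_le_sum fun j _ => Finset.sum_le_sum fun i _ => ?_
  have hp := hρ.eigenvalues_nonneg i
  have hq := hσ.eigenvalues_nonneg j
  set p := hρ.1.eigenvalues i
  set q := hσ.1.eigenvalues j
  set w := transition hρ.1 hσ.1 j i
  rcases hp.eq_or_lt with hp0 | hp0
  · rw [← hp0]
    simpa using mul_nonneg hq (Complex.normSq_nonneg _)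
  have hd : 0 < q + t * p := by positivity
  have hsq : 0 ≤ Complex.normSq ((p : ℂ) * w - ((q + t * p : ℝ) : ℂ) * z j i) / (q + t * p) :=
    div_nonneg (Complex.normSq_nonneg _) hd.le
  refine sub_nonneg.1 (hsq.trans_eq ?_)
  simp only [Complex.normSq_apply, Complex.sub_re, Complex.sub_im, Complex.mul_re, Complex.mul_im,
    Complex.ofReal_re, Complex.ofReal_im, Complex.star_def, Complex.conj_re, Complex.conj_im]
  field_simp
  ring

lemma exists_dualForm_eq_resolventForm {ρ σ : Matrix n n ℂ} (hρ : ρ.PosSemidef)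
    (hσ : σ.PosSemidef) {t : ℝ} (ht : 0 < t) :
    ∃ Z, dualForm ρ σ t Z = resolventForm hρ.1 hσ.1 t := by
  refine ⟨_, (dualForm_conj hρ.1 hσ.1 t (of fun j i => ((hρ.1.eigenvalues i /
    (hσ.1.eigenvalues j + t * hρ.1.eigenvalues i) : ℝ) : ℂ) * transition hρ.1 hσ.1 j i)).trans ?_⟩
  rw [resolventForm]
  refine Finset.sum_congr rfl fun j _ => Finset.sum_congr rfl fun i _ => ?_
  have hp := hρ.eigenvalues_nonneg i
  have hq := hσ.eigenvalues_nonneg j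
  rw [of_apply]
  set p := hρ.1.eigenvalues i
  set q := hσ.1.eigenvalues j
  set w := transition hρ.1 hσ.1 j i
  rcases hp.eq_or_lt with hp0 | hp0
  · simp [← hp0]
  have hd : q + t * p ≠ 0 := by positivity
  simp only [Complex.normSq_apply, Complex.mul_re, Complex.mul_im,
    Complex.ofReal_re, Complex.ofReal_im, Complex.star_def, Complex.conj_re, Complex.conj_im]
  field_simp
  ring

lemma normSq_transition_mul_eigenvalues_eq_zero {ρ σ : Matrix n n ℂ} (hρ : ρ.IsHermitian)
    (hσ : σ.IsHermitian) (hker : ∀ v : n → ℂ, σ.mulVec v = 0 → ρ.mulVec v = 0) {i j : n}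
    (hj : hσ.eigenvalues j = 0) :
    Complex.normSq (transition hρ hσ j i) * hρ.eigenvalues i = 0 := by
  have hv : σ *ᵥ (⇑(hσ.eigenvectorBasis j)) = 0 := by
    rw [hσ.mulVec_eigenvectorBasis, hj, zero_smul]
  have hcol : (hσ.eigenvectorUnitary : Matrix n n ℂ) *ᵥ Pi.single j 1 =
      ⇑(hσ.eigenvectorBasis j) := hσ.eigenvectorUnitary_mulVec j
  have h := hker _ hv
  have h2 := congrArg (fun v => (star (hρ.eigenvectorUnitary : Matrix n n ℂ) *ᵥ v) i) h
  have hprod : star (hρ.eigenvectorUnitary : Matrix n n ℂ) * ρ * hσ.eigenvectorUnitary =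
      diagonal (fun i => (hρ.eigenvalues i : ℂ)) * star (transition hρ hσ) := by
    conv_lhs =>
      enter [1, 2]
      rw [spectral_eq hρ]
    simp only [transition, star_mul, star_star, Matrix.mul_assoc]
    rw [← Matrix.mul_assoc (star _) (hρ.eigenvectorUnitary : Matrix n n ℂ), star_mul_unitary,
      Matrix.one_mul]
  rw [← hcol] at h2
  simp only [mulVec_mulVec, ← Matrix.mul_assoc, hprod, mulVec_zero, Pi.zero_apply] at h2
  rw [mulVec_single_one, col_apply, diagonal_mul, star_apply] at h2
  rcases mul_eq_zero.1 h2 with h3 | h3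
  · rw [Complex.ofReal_eq_zero.1 h3, mul_zero]
  · rw [star_eq_zero.1 h3, map_zero, zero_mul]

lemma hasDerivAt_logForm {ρ σ : Matrix n n ℂ} (hρ : ρ.PosSemidef) (hσ : σ.PosSemidef)
    {t : ℝ} (ht : 0 < t) :
    HasDerivAt (logForm hρ.1 hσ.1) (resolventForm hρ.1 hσ.1 t) t := by
  refine HasDerivAt.fun_sum fun j _ => HasDerivAt.fun_sum fun i _ => ?_
  have hp := hρ.eigenvalues_nonneg i
  have hq := hσ.eigenvalues_nonneg j
  rcases hp.eq_or_lt with hp0 | hp0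
  · simpa [← hp0] using hasDerivAt_const t (0 : ℝ)
  have hd : hσ.1.eigenvalues j + t * hρ.1.eigenvalues i ≠ 0 := by positivity
  have h : HasDerivAt (fun s => hσ.1.eigenvalues j + s * hρ.1.eigenvalues i)
      (hρ.1.eigenvalues i) t := by
    simpa using ((hasDerivAt_id t).mul_const (hρ.1.eigenvalues i)).const_add (hσ.1.eigenvalues j)
  exact ((h.log hd).sub_const _).const_mul _

lemma continuousOn_logForm {ρ σ : Matrix n n ℂ} (hρ : ρ.PosSemidef) (hσ : σ.PosSemidef)
    (hker : ∀ v : n → ℂ, σ.mulVec v = 0 → ρ.mulVec v = 0) :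
    ContinuousOn (logForm hρ.1 hσ.1) (Set.Ici 0) := by
  refine continuousOn_finsetSum _ fun j _ => continuousOn_finsetSum _ fun i _ => ?_
  rcases (hσ.eigenvalues_nonneg j).eq_or_lt with hq | hq
  · simp only [normSq_transition_mul_eigenvalues_eq_zero hρ.1 hσ.1 hker hq.symm, zero_mul]
    exact continuousOn_const
  · refine continuousOn_const.mul ((ContinuousOn.log (by fun_prop) fun t ht => ?_).sub
      continuousOn_const)
    have := mul_nonneg (Set.mem_Ici.1 ht) (hρ.eigenvalues_nonneg i)
    positivity

lemma logForm_zero {ρ σ : Matrix n n ℂ} (hρ : ρ.IsHermitian) (hσ : σ.IsHermitian) :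
    logForm hρ hσ 0 = 0 := by
  simp [logForm]

lemma tendsto_log_add_mul_sub_log {p : ℝ} (q : ℝ) (hp : 0 < p) :
    Tendsto (fun t : ℝ => Real.log (q + t * p) - Real.log t) atTop (𝓝 (Real.log p)) := by
  have h : Tendsto (fun t : ℝ => q / t + p) atTop (𝓝 p) := by
    simpa using (tendsto_const_nhds.div_atTop tendsto_id).add_const p
  refine (h.log hp.ne').congr' ?_
  filter_upwards [eventually_gt_atTop 0, h.eventually_ne hp.ne'] with t ht hne
  have : q + t * p = t * (q / t + p) := by field_simp
  rw [this, Real.log_mul ht.ne' hne]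
  ring

lemma tendsto_logForm_sub {ρ σ : Matrix n n ℂ} (hρ : ρ.PosSemidef) (hσ : σ.PosSemidef) :
    Tendsto (fun t => logForm hρ.1 hσ.1 t - ρ.trace.re * Real.log t) atTop
      (𝓝 ((ρ * mlog ρ).trace - (ρ * mlog σ).trace).re) := by
  rw [trace_mul_mlog_sub hρ.1 hσ.1]
  simp only [logForm, ← sum_normSq_transition_mul_eigenvalues hρ.1 hσ.1, Finset.sum_mul,
    ← Finset.sum_sub_distrib]
  refine tendsto_finsetSum _ fun j _ => tendsto_finsetSum _ fun i _ => ?_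
  rcases (hρ.eigenvalues_nonneg i).eq_or_lt with hp | hp
  · simp [← hp]
  · refine (((tendsto_log_add_mul_sub_log (hσ.1.eigenvalues j) hp).sub_const
      (Real.log (hσ.1.eigenvalues j))).const_mul _).congr fun t => ?_
    ring

end Spectral

section PartialTrace

variable {X Y : Type*} [Fintype X] [Fintype Y]

lemma ptraceB_eq_sum (M : Matrix (X × Y) (X × Y) ℂ) :
    ptraceB M = ∑ b, M.submatrix (fun a => (a, b)) (fun a => (a, b)) := by
  ext a a'
  simp [ptraceB, Matrix.sum_apply]

lemma posSemidef_ptraceB {M : Matrix (X × Y) (X × Y) ℂ} (hM : M.PosSemidef) :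
    (ptraceB M).PosSemidef := by
  rw [ptraceB_eq_sum]
  exact posSemidef_sum _ fun b _ => hM.submatrix _

variable [DecidableEq Y]

lemma trace_mul_ptraceB (A : Matrix X X ℂ) (M : Matrix (X × Y) (X × Y) ℂ) :
    (A * ptraceB M).trace = ((A ⊗ₖ (1 : Matrix Y Y ℂ)) * M).trace := by
  simp only [trace, diag_apply, mul_apply, ptraceB, of_apply, Fintype.sum_prod_type,
    kroneckerMap_apply, one_apply, mul_ite, mul_one, mul_zero, ite_mul, zero_mul, Finset.mul_sum,
    Finset.sum_ite_eq, Finset.mem_univ, if_true]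
  exact Finset.sum_congr rfl fun a _ => Finset.sum_comm

lemma trace_ptraceB (M : Matrix (X × Y) (X × Y) ℂ) : (ptraceB M).trace = M.trace := by
  simpa using trace_mul_ptraceB 1 M

lemma dualForm_ptraceB (ρ σ : Matrix (X × Y) (X × Y) ℂ) (t : ℝ) (Z : Matrix X X ℂ) :
    dualForm (ptraceB ρ) (ptraceB σ) t Z = dualForm ρ σ t (Z ⊗ₖ (1 : Matrix Y Y ℂ)) := by
  have hmid (A B : Matrix X X ℂ) : (A * ptraceB σ * B).trace =
      ((A ⊗ₖ (1 : Matrix Y Y ℂ)) * σ * (B ⊗ₖ (1 : Matrix Y Y ℂ))).trace := by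
    rw [trace_mul_comm, ← Matrix.mul_assoc, trace_mul_ptraceB, trace_mul_comm (_ * σ),
      ← Matrix.mul_assoc, ← mul_kronecker_mul, Matrix.one_mul]
  simp only [dualForm, hmid, trace_mul_ptraceB, conjTranspose_kronecker, conjTranspose_one,
    ← mul_kronecker_mul, Matrix.one_mul]

lemma ker_ptraceB_le {ρ σ : Matrix (X × Y) (X × Y) ℂ} (hσ : σ.PosSemidef)
    (hker : ∀ v : X × Y → ℂ, σ.mulVec v = 0 → ρ.mulVec v = 0) (v : X → ℂ)
    (hv : (ptraceB σ).mulVec v = 0) : (ptraceB ρ).mulVec v = 0 := by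
  let e (b : Y) : X × Y → ℂ := fun x => if x.2 = b then v x.1 else 0
  have hsub (M : Matrix (X × Y) (X × Y) ℂ) (b : Y) (a : X) :
      (M *ᵥ e b) (a, b) = (M.submatrix (fun a => (a, b)) (fun a => (a, b)) *ᵥ v) a := by
    simp [mulVec, dotProduct, e, Fintype.sum_prod_type]
  have hquad (b : Y) : star (e b) ⬝ᵥ (σ *ᵥ e b) =
      star v ⬝ᵥ (σ.submatrix (fun a => (a, b)) (fun a => (a, b)) *ᵥ v) := by
    simp only [dotProduct, Fintype.sum_prod_type, ← hsub]
    refine Finset.sum_congr rfl fun a _ => ?_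
    simp [e, apply_ite]
  have hsum : ∑ b, star (e b) ⬝ᵥ (σ *ᵥ e b) = 0 := by
    simp only [hquad]
    rw [← dotProduct_sum, ← sum_mulVec, ← ptraceB_eq_sum, hv, dotProduct_zero]
  have hzero := (Finset.sum_eq_zero_iff_of_nonneg
    fun b _ => hσ.dotProduct_mulVec_nonneg (e b)).1 hsum
  rw [ptraceB_eq_sum, sum_mulVec]
  refine Finset.sum_eq_zero fun b hb => ?_
  ext a
  rw [← hsub, hker _ ((hσ.dotProduct_mulVec_zero_iff _).1 (hzero b hb))]
  simp

variable [DecidableEq X]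

lemma resolventForm_ptraceB_le {ρ σ : Matrix (X × Y) (X × Y) ℂ} (hρ : ρ.PosSemidef)
    (hσ : σ.PosSemidef) {t : ℝ} (ht : 0 < t) :
    resolventForm (posSemidef_ptraceB hρ).1 (posSemidef_ptraceB hσ).1 t ≤
      resolventForm hρ.1 hσ.1 t := by
  obtain ⟨Z, hZ⟩ :=
    exists_dualForm_eq_resolventForm (posSemidef_ptraceB hρ) (posSemidef_ptraceB hσ) ht
  rw [← hZ, dualForm_ptraceB]
  exact dualForm_le_resolventForm hρ hσ ht _

lemma logForm_ptraceB_le {ρ σ : Matrix (X × Y) (X × Y) ℂ} (hρ : ρ.PosSemidef)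
    (hσ : σ.PosSemidef) (hker : ∀ v : X × Y → ℂ, σ.mulVec v = 0 → ρ.mulVec v = 0)
    {t : ℝ} (ht : 0 ≤ t) :
    logForm (posSemidef_ptraceB hρ).1 (posSemidef_ptraceB hσ).1 t ≤ logForm hρ.1 hσ.1 t := by
  have hmono : MonotoneOn (fun t => logForm hρ.1 hσ.1 t -
      logForm (posSemidef_ptraceB hρ).1 (posSemidef_ptraceB hσ).1 t) (Set.Ici 0) := by
    refine monotoneOn_of_hasDerivWithinAt_nonneg (convex_Ici 0)
      ((continuousOn_logForm hρ hσ hker).sub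
        (continuousOn_logForm (posSemidef_ptraceB hρ) (posSemidef_ptraceB hσ)
          (ker_ptraceB_le hσ hker)))
      (fun s hs => ?_) (fun s hs => sub_nonneg.2 (resolventForm_ptraceB_le hρ hσ (t := s) ?_))
    · rw [interior_Ici] at hs
      exact ((hasDerivAt_logForm hρ hσ hs).sub (hasDerivAt_logForm (posSemidef_ptraceB hρ)
        (posSemidef_ptraceB hσ) hs)).hasDerivWithinAt
    · rwa [interior_Ici] at hs
  simpa [logForm_zero] using hmono Set.self_mem_Ici ht ht

end PartialTrace

end RelEntMonotone

theorem relEnt_ptrace_le {X Y : Type*} [Fintype X] [Fintype Y]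
    [DecidableEq X] [DecidableEq Y]
    (ρ σ : Matrix (X × Y) (X × Y) ℂ) (hρ : IsDensity ρ) (hσ : IsDensity σ) :
    relEnt (ptraceB ρ) (ptraceB σ) ≤ relEnt ρ σ := by
  by_cases hker : ∀ v : X × Y → ℂ, σ.mulVec v = 0 → ρ.mulVec v = 0
  · rw [relEnt, relEnt, if_pos hker, if_pos (RelEntMonotone.ker_ptraceB_le hσ.1 hker),
      EReal.coe_le_coe_iff]
    have h := RelEntMonotone.tendsto_logForm_sub (RelEntMonotone.posSemidef_ptraceB hρ.1)
      (RelEntMonotone.posSemidef_ptraceB hσ.1)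
    rw [RelEntMonotone.trace_ptraceB] at h
    refine le_of_tendsto_of_tendsto h (RelEntMonotone.tendsto_logForm_sub hρ.1 hσ.1) ?_
    filter_upwards [Filter.eventually_ge_atTop 0] with t ht
    exact sub_le_sub_right (RelEntMonotone.logForm_ptraceB_le hρ.1 hσ.1 hker ht) _
  · rw [relEnt.eq_def ρ σ, if_neg hker]
    exact le_top
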